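/- Every integral lattice L in ℝ^4 with Λ4 ⊆ L is isometric (via a linear isometry of ℝ^4) to one of the six lattices: Λ4; Λ4 + ℤ·ε1; Λ4 + ℤ·ε1 + ℤ·ε2; (A1)^4 = {x ∈ ℤ^4 : x1+x2 and x3+x4 are even}; D4 = {x ∈ ℤ^4 : x1+x2+x3+x4 is even}; and ℤ^4. -/

import Mathlib

noncomputable section

open scoped RealInnerProductSpace

/-- `ℝ^n` with the standard inner product. -/
abbrev E (n : ℕ) := EuclideanSpace ℝ (Fin n)

/-- The standard basis vector `ε i`. -/
def εv {n : ℕ} (i : Fin n) : E n := EuclideanSpace.single i 1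

/-- The vector of `ℝ^n` with the given coordinates. -/
def vec {n : ℕ} (x : Fin n → ℝ) : E n := (WithLp.equiv 2 (Fin n → ℝ)).symm x

/-- The vector of `ℝ^n` with the given integer coordinates. -/
def intVec {n : ℕ} (x : Fin n → ℤ) : E n := (WithLp.equiv 2 (Fin n → ℝ)).symm fun i => (x i : ℝ)

/-- A lattice is integral if all pairwise inner products of its elements are integers. -/
def LatticeIsIntegral {n : ℕ} (L : Submodule ℤ (E n)) : Prop :=
  ∀ x ∈ L, ∀ y ∈ L, ∃ k : ℤ, ⟪x, y⟫ = (k : ℝ)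

/-- Two lattices are isometric if a linear isometry of the ambient space carries
one onto the other. -/
def IsometricLattices {n : ℕ} (L M : Submodule ℤ (E n)) : Prop :=
  ∃ g : E n ≃ₗᵢ[ℝ] E n, g '' (L : Set (E n)) = (M : Set (E n))

/-- The laminated lattice `Λ₄`, the ℤ-span of `2ε1, 2ε2, 2ε3, ε1+ε2+ε3+ε4`, i.e.
`{x ∈ ℤ⁴ : x 0 ≡ x 1 ≡ x 2 ≡ x 3 (mod 2)} ≅ √2·D₄`. -/
def Λ4 : Submodule ℤ (E 4) :=
  Submodule.span ℤ {(2 : ℝ) • εv 0, (2 : ℝ) • εv 1, (2 : ℝ) • εv 2, εv 0 + εv 1 + εv 2 + εv 3}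

/-- `(A₁)⁴ = {x ∈ ℤ⁴ : x1+x2 and x3+x4 are even}`. -/
def latA1 : Submodule ℤ (E 4) :=
  Submodule.span ℤ
    {v : E 4 | ∃ x : Fin 4 → ℤ, Even (x 0 + x 1) ∧ Even (x 2 + x 3) ∧ v = intVec x}

/-- `D₄ = {x ∈ ℤ⁴ : x1+x2+x3+x4 is even}`. -/
def latD4 : Submodule ℤ (E 4) :=
  Submodule.span ℤ {v : E 4 | ∃ x : Fin 4 → ℤ, Even (x 0 + x 1 + x 2 + x 3) ∧ v = intVec x}

/-- `ℤ⁴`. -/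
def latZ4 : Submodule ℤ (E 4) :=
  Submodule.span ℤ {v : E 4 | ∃ x : Fin 4 → ℤ, v = intVec x}

/-!
Since `2εᵢ` lies in `Λ4`, an integral lattice `L ⊇ Λ4` consists of halves of integral vectors, and
integrality of norms makes the doubled coordinates all even or all odd. If `L` is not contained in
`ℤ⁴`, a reflection in a norm 4 vector `(1, 1, 1, ±1)`, which preserves `Λ4` because inner products
on `Λ4` are even, moves `L` into `ℤ⁴`. Lattices between `Λ4` and `ℤ⁴` correspond to binary codes of
length 4 containing the all-ones word (Construction A), and permuting coordinates is an isometry.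
Such a code `C`, if neither spanned by the all-ones word nor the full space, lies in a chain
`0 < ⟨1⟩ < ⟨1, w⟩ ≤ C ≤ ker f < 𝔽₂⁴`. By dimension `C = ⟨1, w⟩` or `C = ker f`, and up to
permutation only the weight of `w` or of the vector representing `f` matters.
-/

section ConstructionA

variable {n : ℕ} {C D : Submodule (ZMod 2) (Fin n → ZMod 2)} {L : Submodule ℤ (E n)}

/-- The embedding `ℤ^n → ℝ^n`, `z ↦ intVec z`, as a `ℤ`-linear map. -/
def intVecHom (n : ℕ) : (Fin n → ℤ) →ₗ[ℤ] E n where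
  toFun := intVec
  map_add' z w := by ext i; simp [intVec]
  map_smul' k z := by ext i; simp [intVec]

/-- Coordinatewise reduction `ℤ^n → 𝔽₂^n`, as a `ℤ`-linear map. -/
def reduceMod2 (n : ℕ) : (Fin n → ℤ) →ₗ[ℤ] (Fin n → ZMod 2) :=
  (Algebra.linearMap ℤ (ZMod 2)).compLeft (Fin n)

/-- Construction A: the lattice of all integral vectors whose reduction modulo 2 lies in the binary
linear code `C`, without the customary rescaling by `1/√2`. -/
def constructionA (C : Submodule (ZMod 2) (Fin n → ZMod 2)) : Submodule ℤ (E n) :=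
  ((C.restrictScalars ℤ).comap (reduceMod2 n)).map (intVecHom n)

/-- The binary code of a lattice: the reductions modulo 2 of its integral vectors. -/
def codeOf (L : Submodule ℤ (E n)) : Submodule (ZMod 2) (Fin n → ZMod 2) :=
  AddSubgroup.toZModSubmodule 2 ((L.comap (intVecHom n)).map (reduceMod2 n)).toAddSubgroup

@[simp]
lemma intVec_apply (z : Fin n → ℤ) (i : Fin n) : intVec z i = (z i : ℝ) := rfl

@[simp]
lemma intVecHom_apply (z : Fin n → ℤ) : intVecHom n z = intVec z := rfl

@[simp]
lemma reduceMod2_apply (z : Fin n → ℤ) (i : Fin n) : reduceMod2 n z i = (z i : ZMod 2) := rfl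

lemma reduceMod2_single_one (i : Fin n) : reduceMod2 n (Pi.single i 1) = Pi.single i 1 := by
  ext j
  simp [Pi.single_apply]

lemma intVec_single_one (i : Fin n) : intVec (Pi.single i 1) = εv i := by
  ext j
  simp [εv, Pi.single_apply]

lemma intVec_injective : Function.Injective (intVec (n := n)) := fun z w h => by
  ext i
  simpa using congr($h i)

lemma inner_intVec (z w : Fin n → ℤ) : ⟪intVec z, intVec w⟫ = ((z ⬝ᵥ w : ℤ) : ℝ) := by
  simp [PiLp.inner_apply, dotProduct, mul_comm]

lemma mem_constructionA {x : E n} :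
    x ∈ constructionA C ↔ ∃ z, reduceMod2 n z ∈ C ∧ intVec z = x := Iff.rfl

lemma intVec_mem_constructionA {z : Fin n → ℤ} :
    intVec z ∈ constructionA C ↔ reduceMod2 n z ∈ C := by
  simp [mem_constructionA, intVec_injective.eq_iff]

lemma constructionA_mono (h : C ≤ D) : constructionA C ≤ constructionA D := by
  rintro _ ⟨z, hz, rfl⟩
  exact ⟨z, h hz, rfl⟩

lemma constructionA_bot_le_iff : constructionA ⊥ ≤ L ↔ ∀ i, (2 : ℝ) • εv i ∈ L := by
  constructor
  · refine fun h i => h ⟨Pi.single i 2, ?_, ?_⟩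
    · ext j
      by_cases hj : j = i <;> simp [hj, show (2 : ZMod 2) = 0 from rfl]
    · ext j
      simp [εv, Pi.single_apply]
  · rintro h _ ⟨z, hz, rfl⟩
    have hz2 : ∀ i, ∃ t, z i = 2 * t := fun i =>
      (ZMod.intCast_zmod_eq_zero_iff_dvd _ 2).1 (congrFun hz i)
    choose t ht using hz2
    have hsum : intVec z = ∑ i, t i • (2 : ℝ) • (εv i : E n) := by
      ext j
      simp [ht, εv, Pi.single_apply, mul_comm]
    rw [intVecHom_apply, hsum]
    exact sum_mem fun i _ => L.smul_mem _ (h i)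

lemma intVec_mem_iff_reduceMod2_mem_codeOf (hL : constructionA ⊥ ≤ L) {z : Fin n → ℤ} :
    intVec z ∈ L ↔ reduceMod2 n z ∈ codeOf L := by
  refine ⟨fun h => ⟨z, h, rfl⟩, ?_⟩
  rintro ⟨w, hw, hwz⟩
  have hdiff : intVec (z - w) ∈ L := hL <| intVec_mem_constructionA.2 <| by
    rw [map_sub, hwz]; simp
  simpa [← intVecHom_apply] using L.add_mem hdiff hw

lemma constructionA_le_iff_le_codeOf (hL : constructionA ⊥ ≤ L) :
    constructionA C ≤ L ↔ C ≤ codeOf L := by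
  constructor
  · intro h w hw
    obtain ⟨z, rfl⟩ : ∃ z, reduceMod2 n z = w :=
      ⟨fun i => (w i).valMinAbs, by ext i; simp⟩
    exact ⟨z, h (intVec_mem_constructionA.2 hw), rfl⟩
  · rintro h _ ⟨z, hz, rfl⟩
    exact (intVec_mem_iff_reduceMod2_mem_codeOf hL).2 (h hz)

lemma constructionA_codeOf (hL : constructionA ⊥ ≤ L) (hL' : L ≤ constructionA ⊤) :
    constructionA (codeOf L) = L := by
  refine le_antisymm ((constructionA_le_iff_le_codeOf hL).2 le_rfl) fun x hx => ?_
  obtain ⟨z, -, rfl⟩ := hL' hx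
  exact intVec_mem_constructionA.2 ⟨z, hx, rfl⟩

lemma constructionA_sup_span (C : Submodule (ZMod 2) (Fin n → ZMod 2)) (S : Set (Fin n → ℤ)) :
    constructionA (C ⊔ Submodule.span (ZMod 2) (reduceMod2 n '' S)) =
      constructionA C ⊔ Submodule.span ℤ (intVec '' S) := by
  refine le_antisymm ?_ (sup_le (constructionA_mono le_sup_left) (Submodule.span_le.2 ?_))
  · have hbot := (constructionA_mono bot_le).trans
      (le_sup_left : _ ≤ constructionA C ⊔ Submodule.span ℤ (intVec '' S))
    refine (constructionA_le_iff_le_codeOf hbot).2 (sup_le ?_ (Submodule.span_le.2 ?_))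
    · exact (constructionA_le_iff_le_codeOf hbot).1 le_sup_left
    · rintro _ ⟨z, hz, rfl⟩
      exact ⟨z, Submodule.mem_sup_right (Submodule.subset_span ⟨z, hz, rfl⟩), rfl⟩
  · rintro _ ⟨z, hz, rfl⟩
    exact intVec_mem_constructionA.2
      (Submodule.mem_sup_right (Submodule.subset_span ⟨z, hz, rfl⟩))

lemma exists_inner_eq_two_mul_of_mem_constructionA (hC : ∀ c ∈ C, ∀ d ∈ C, c ⬝ᵥ d = 0)
    {x y : E n} (hx : x ∈ constructionA C) (hy : y ∈ constructionA C) :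
    ∃ k : ℤ, ⟪x, y⟫ = 2 * k := by
  obtain ⟨z, hz, rfl⟩ := hx
  obtain ⟨w, hw, rfl⟩ := hy
  have hzw : ((z ⬝ᵥ w : ℤ) : ZMod 2) = 0 := by
    simpa [dotProduct] using hC _ hz _ hw
  obtain ⟨k, hk⟩ := (ZMod.intCast_zmod_eq_zero_iff_dvd _ 2).1 hzw
  exact ⟨k, by simp [inner_intVec, hk]⟩

end ConstructionA

section Isometry

variable {n : ℕ} {C D : Submodule (ZMod 2) (Fin n → ZMod 2)} {L M N : Submodule ℤ (E n)}

lemma IsometricLattices.refl (L : Submodule ℤ (E n)) : IsometricLattices L L :=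
  ⟨LinearIsometryEquiv.refl ℝ _, by simp⟩

lemma IsometricLattices.trans : IsometricLattices L M → IsometricLattices M N →
    IsometricLattices L N := by
  rintro ⟨g, hg⟩ ⟨h, hh⟩
  refine ⟨g.trans h, ?_⟩
  rw [← hh, ← hg, Set.image_image]
  rfl

/-- Permutation equivalence of binary codes: some permutation of the coordinates carries `C`
onto `D`. -/
def PermEquiv (C D : Submodule (ZMod 2) (Fin n → ZMod 2)) : Prop :=
  ∃ σ : Equiv.Perm (Fin n), C.map (LinearMap.funLeft (ZMod 2) (ZMod 2) σ) = D

lemma PermEquiv.refl (C : Submodule (ZMod 2) (Fin n → ZMod 2)) : PermEquiv C C :=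
  ⟨1, Submodule.map_id C⟩

lemma PermEquiv.isometricLattices (h : PermEquiv C D) :
    IsometricLattices (constructionA C) (constructionA D) := by
  obtain ⟨σ, rfl⟩ := h
  have hperm (z : Fin n → ℤ) :
      LinearIsometryEquiv.piLpCongrLeft 2 ℝ ℝ σ.symm (intVec z) = intVec (z ∘ σ) := by
    ext i
    simp [LinearIsometryEquiv.piLpCongrLeft_apply]
  refine ⟨LinearIsometryEquiv.piLpCongrLeft 2 ℝ ℝ σ.symm, Set.ext fun x => ⟨?_, ?_⟩⟩
  · rintro ⟨_, ⟨z, hz, rfl⟩, rfl⟩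
    exact ⟨z ∘ σ, ⟨_, hz, rfl⟩, (hperm z).symm⟩
  · rintro ⟨z, ⟨w, hw, hwz⟩, rfl⟩
    refine ⟨_, intVec_mem_constructionA (z := z ∘ σ.symm).2 ?_, ?_⟩
    · convert! hw using 1
      ext i
      simpa using (congrFun hwz (σ.symm i)).symm
    · simp [hperm, Function.comp_assoc]

end Isometry

section Codes

variable {n : ℕ}

/-- The binary code of length `n` formed by the words of even weight. -/
def evenCode (n : ℕ) : Submodule (ZMod 2) (Fin n → ZMod 2) :=
  LinearMap.ker (∑ i, LinearMap.proj i)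

lemma mem_evenCode {w : Fin n → ZMod 2} : w ∈ evenCode n ↔ ∑ i, w i = 0 := by
  simp [evenCode]

lemma funLeft_single (σ : Equiv.Perm (Fin n)) (i : Fin n) :
    LinearMap.funLeft (ZMod 2) (ZMod 2) σ (Pi.single i 1) = Pi.single (σ.symm i) 1 := by
  ext j
  simp [Pi.single_apply, LinearMap.funLeft_apply, Equiv.eq_symm_apply]

lemma exists_perm_symm_apply_eq {i j k l : Fin n} (hij : i ≠ j) (hkl : k ≠ l) :
    ∃ σ : Equiv.Perm (Fin n), σ.symm i = k ∧ σ.symm j = l := by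
  have h2 : MulAction.IsMultiplyPretransitive (Equiv.Perm (Fin n)) (Fin n) 2 :=
    Equiv.Perm.isMultiplyPretransitive _ _
  obtain ⟨τ, hi, hj⟩ := MulAction.is_two_pretransitive_iff.1 h2 hij hkl
  exact ⟨τ⁻¹, hi, hj⟩

lemma permEquiv_span_one_single (i j : Fin n) :
    PermEquiv (Submodule.span (ZMod 2) {1, Pi.single i 1})
      (Submodule.span (ZMod 2) {1, Pi.single j 1}) := by
  refine ⟨Equiv.swap i j, ?_⟩
  rw [Submodule.map_span, Set.image_pair, funLeft_single, Equiv.symm_swap, Equiv.swap_apply_left]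
  rfl

lemma permEquiv_span_one_single_add_single {i j k l : Fin n} (hij : i ≠ j) (hkl : k ≠ l) :
    PermEquiv (Submodule.span (ZMod 2) {1, Pi.single i 1 + Pi.single j 1})
      (Submodule.span (ZMod 2) {1, Pi.single k 1 + Pi.single l 1}) := by
  obtain ⟨σ, hi, hj⟩ := exists_perm_symm_apply_eq hij hkl
  refine ⟨σ, ?_⟩
  rw [Submodule.map_span, Set.image_pair, map_add, funLeft_single, funLeft_single, hi, hj]
  rfl

lemma permEquiv_eqLocus_proj {i j k l : Fin n} (hij : i ≠ j) (hkl : k ≠ l) :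
    PermEquiv (LinearMap.eqLocus (LinearMap.proj i) (LinearMap.proj j))
      (LinearMap.eqLocus (LinearMap.proj k) (LinearMap.proj l)) := by
  obtain ⟨σ, hi, hj⟩ := exists_perm_symm_apply_eq hij hkl
  refine ⟨σ, ?_⟩
  ext w
  refine (Submodule.mem_map_equiv (e := LinearEquiv.funCongrLeft (ZMod 2) (ZMod 2) σ) _).trans ?_
  simp [LinearEquiv.funCongrLeft_symm, LinearMap.funLeft_apply, hi, hj]

lemma eq_single_or_of_notMem_evenCode {w : Fin 4 → ZMod 2} (hw : w ∉ evenCode 4) :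
    ∃ i, w = Pi.single i 1 ∨ w = 1 + Pi.single i 1 := by
  rw [mem_evenCode] at hw
  revert w
  decide

lemma eq_single_add_single_of_mem_evenCode {w : Fin 4 → ZMod 2} (hw : w ∈ evenCode 4)
    (h0 : w ≠ 0) (h1 : w ≠ 1) : ∃ i j, i ≠ j ∧ w = Pi.single i 1 + Pi.single j 1 := by
  rw [mem_evenCode] at hw
  revert w
  decide

lemma mem_span_one_single_add_single {w : Fin 4 → ZMod 2} :
    w ∈ Submodule.span (ZMod 2) {1, Pi.single 0 1 + Pi.single 1 1} ↔
      w 0 + w 1 = 0 ∧ w 2 + w 3 = 0 := by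
  rw [Submodule.mem_span_pair]
  revert w
  decide

lemma eqLocus_proj_two_three :
    LinearMap.eqLocus (LinearMap.proj 2) (LinearMap.proj 3) =
      Submodule.span (ZMod 2) {(1 : Fin 4 → ZMod 2), Pi.single 0 1, Pi.single 1 1} := by
  ext w
  rw [Submodule.mem_span_triple, LinearMap.mem_eqLocus, LinearMap.proj_apply, LinearMap.proj_apply]
  revert w
  decide

lemma span_pair_self_add {R M : Type*} [Ring R] [AddCommGroup M] [Module R M] (x y : M) :
    Submodule.span R {x, x + y} = Submodule.span R {x, y} := by
  ext z
  simp only [Submodule.mem_span_pair]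
  constructor
  · rintro ⟨a, b, rfl⟩
    exact ⟨a + b, b, by rw [add_smul, smul_add, add_assoc]⟩
  · rintro ⟨a, b, rfl⟩
    exact ⟨a - b, b, by rw [sub_smul, smul_add, ← add_assoc, sub_add_cancel]⟩

lemma permEquiv_span_one_of_notMem {w : Fin 4 → ZMod 2} (hw : w ∉ Submodule.span (ZMod 2) {1}) :
    PermEquiv (Submodule.span (ZMod 2) {1, w}) (Submodule.span (ZMod 2) {1, Pi.single 0 1}) ∨
      PermEquiv (Submodule.span (ZMod 2) {1, w})
        (Submodule.span (ZMod 2) {1, Pi.single 0 1 + Pi.single 1 1}) := by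
  by_cases heven : w ∈ evenCode 4
  · have h0 : w ≠ 0 := fun h => hw (h ▸ zero_mem _)
    have h1 : w ≠ 1 := fun h => hw (h ▸ Submodule.mem_span_singleton_self _)
    obtain ⟨i, j, hij, rfl⟩ := eq_single_add_single_of_mem_evenCode heven h0 h1
    exact .inr (permEquiv_span_one_single_add_single hij (by decide))
  · left
    obtain ⟨i, rfl | rfl⟩ := eq_single_or_of_notMem_evenCode heven
    · exact permEquiv_span_one_single i 0
    · rw [span_pair_self_add]
      exact permEquiv_span_one_single i 0

lemma ker_dotProductEquiv_single_add_single (i j : Fin n) :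
    LinearMap.ker (dotProductEquiv (ZMod 2) (Fin n) (Pi.single i 1 + Pi.single j 1)) =
      LinearMap.eqLocus (LinearMap.proj i) (LinearMap.proj j) := by
  ext w
  simp [CharTwo.add_eq_zero]

lemma ker_dotProductEquiv_one :
    LinearMap.ker (dotProductEquiv (ZMod 2) (Fin n) 1) = evenCode n := by
  ext w
  simp [mem_evenCode, one_dotProduct]

lemma permEquiv_ker_of_apply_one_eq_zero {f : Module.Dual (ZMod 2) (Fin 4 → ZMod 2)} (hf : f ≠ 0)
    (hf1 : f 1 = 0) :
    PermEquiv (LinearMap.ker f) (Submodule.span (ZMod 2) {1, Pi.single 0 1, Pi.single 1 1}) ∨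
      PermEquiv (LinearMap.ker f) (evenCode 4) := by
  obtain ⟨a, rfl⟩ := (dotProductEquiv (ZMod 2) (Fin 4)).surjective f
  have ha : a ∈ evenCode 4 := by simpa [mem_evenCode, dotProduct_one] using hf1
  by_cases h1 : a = 1
  · right
    rw [h1, ker_dotProductEquiv_one]
    exact .refl _
  · left
    obtain ⟨i, j, hij, rfl⟩ :=
      eq_single_add_single_of_mem_evenCode ha (fun h => hf (by rw [h, map_zero])) h1
    rw [ker_dotProductEquiv_single_add_single, ← eqLocus_proj_two_three]
    exact permEquiv_eqLocus_proj hij (by decide)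

lemma eq_or_eq_of_finrank_eq_four {K V : Type*} [DivisionRing K] [AddCommGroup V] [Module K V]
    (hV : Module.finrank K V = 4) {R P C Q : Submodule K V} (hR : ⊥ < R) (hRP : R < P)
    (hPC : P ≤ C) (hCQ : C ≤ Q) (hQ : Q < ⊤) : P = C ∨ C = Q := by
  have : FiniteDimensional K V := .of_finrank_eq_succ hV
  by_contra! hne
  have h1 := Submodule.finrank_lt_finrank_of_lt hR
  have h2 := Submodule.finrank_lt_finrank_of_lt hRP
  have h3 := Submodule.finrank_lt_finrank_of_lt (hPC.lt_of_ne hne.1)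
  have h4 := Submodule.finrank_lt_finrank_of_lt (hCQ.lt_of_ne hne.2)
  have h5 := Submodule.finrank_lt hQ.ne
  omega

lemma permEquiv_of_one_mem {C : Submodule (ZMod 2) (Fin 4 → ZMod 2)} (hC : 1 ∈ C) :
    PermEquiv C (Submodule.span (ZMod 2) {1}) ∨
    PermEquiv C (Submodule.span (ZMod 2) {1, Pi.single 0 1}) ∨
    PermEquiv C (Submodule.span (ZMod 2) {1, Pi.single 0 1, Pi.single 1 1}) ∨
    PermEquiv C (Submodule.span (ZMod 2) {1, Pi.single 0 1 + Pi.single 1 1}) ∨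
    PermEquiv C (evenCode 4) ∨
    PermEquiv C ⊤ := by
  have hrep : Submodule.span (ZMod 2) {1} ≤ C := (Submodule.span_singleton_le_iff_mem _ _).2 hC
  obtain rfl | htop := eq_or_ne C ⊤
  · simp [PermEquiv.refl]
  obtain heq | hlt := hrep.eq_or_lt
  · simp [← heq, PermEquiv.refl]
  obtain ⟨w, hwC, hw⟩ := SetLike.exists_of_lt hlt
  obtain ⟨f, hf, hCf⟩ := C.exists_le_ker_of_lt_top htop.lt_top
  have hpair : Submodule.span (ZMod 2) {1, w} ≤ C :=
    Submodule.span_le.2 (Set.pair_subset hC hwC)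
  have hrep_pos : ⊥ < Submodule.span (ZMod 2) {(1 : Fin 4 → ZMod 2)} := by
    simp [bot_lt_iff_ne_bot]
  have hrep_lt : Submodule.span (ZMod 2) {1} < Submodule.span (ZMod 2) {1, w} := by
    rw [Set.pair_comm, Submodule.span_insert]
    exact (Submodule.covBy_span_singleton_sup hw).lt
  have hker : LinearMap.ker f < ⊤ := lt_top_iff_ne_top.2 (mt LinearMap.ker_eq_top.1 hf)
  obtain rfl | rfl :=
    eq_or_eq_of_finrank_eq_four (by simp) hrep_pos hrep_lt hpair hCf hker
  · have hspan := permEquiv_span_one_of_notMem hw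
    tauto
  · have hdual := permEquiv_ker_of_apply_one_eq_zero hf hC
    tauto

end Codes

section Identification

lemma two_smul_εv_mem_constructionA {n : ℕ} (C : Submodule (ZMod 2) (Fin n → ZMod 2)) (i : Fin n) :
    (2 : ℝ) • εv i ∈ constructionA C :=
  constructionA_bot_le_iff.1 (constructionA_mono bot_le) i

lemma reduceMod2_one (n : ℕ) : reduceMod2 n 1 = 1 := by
  ext i
  simp

lemma sum_εv_eq_intVec_one : (εv 0 + εv 1 + εv 2 + εv 3 : E 4) = intVec 1 := by
  ext i
  fin_cases i <;> simp [εv]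

lemma constructionA_span_one : constructionA (Submodule.span (ZMod 2) {1}) = Λ4 := by
  have hsum : intVec 1 ∈ Λ4 := Submodule.subset_span (by simp [sum_εv_eq_intVec_one])
  have hbot : constructionA ⊥ ≤ Λ4 := by
    have h0 : (2 : ℝ) • εv 0 ∈ Λ4 := Submodule.subset_span (by simp)
    have h1 : (2 : ℝ) • εv 1 ∈ Λ4 := Submodule.subset_span (by simp)
    have h2 : (2 : ℝ) • εv 2 ∈ Λ4 := Submodule.subset_span (by simp)
    have h3 : (2 : ℝ) • εv 3 ∈ Λ4 := by
      have : (2 : ℝ) • εv 3 = (2 : ℤ) • intVec 1 -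
          ((2 : ℝ) • εv 0 + (2 : ℝ) • εv 1 + (2 : ℝ) • (εv 2 : E 4)) := by
        rw [← sum_εv_eq_intVec_one]
        module
      rw [this]
      exact sub_mem (Λ4.smul_mem 2 hsum) (add_mem (add_mem h0 h1) h2)
    refine constructionA_bot_le_iff.2 fun i => ?_
    fin_cases i <;> assumption
  apply le_antisymm
  · rw [constructionA_le_iff_le_codeOf hbot, Submodule.span_singleton_le_iff_mem]
    exact ⟨1, hsum, reduceMod2_one 4⟩
  · refine Submodule.span_le.2 ?_
    rintro _ (rfl | rfl | rfl | rfl)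
    iterate 3 exact two_smul_εv_mem_constructionA _ _
    rw [sum_εv_eq_intVec_one]
    refine intVec_mem_constructionA.2 ?_
    rw [reduceMod2_one]
    exact Submodule.mem_span_singleton_self _

lemma constructionA_span_one_single :
    constructionA (Submodule.span (ZMod 2) {1, Pi.single 0 1}) =
      Λ4 ⊔ Submodule.span ℤ {εv 0} := by
  have h := constructionA_sup_span (Submodule.span (ZMod 2) {1}) {(Pi.single 0 1 : Fin 4 → ℤ)}
  rwa [Set.image_singleton, Set.image_singleton, reduceMod2_single_one, intVec_single_one,
    constructionA_span_one, ← Submodule.span_insert] at h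

lemma constructionA_span_one_single_single :
    constructionA (Submodule.span (ZMod 2) {1, Pi.single 0 1, Pi.single 1 1}) =
      Λ4 ⊔ Submodule.span ℤ {εv 0, εv 1} := by
  have h := constructionA_sup_span (Submodule.span (ZMod 2) {1})
    {(Pi.single 0 1 : Fin 4 → ℤ), Pi.single 1 1}
  rwa [Set.image_pair, Set.image_pair, reduceMod2_single_one, reduceMod2_single_one,
    intVec_single_one, intVec_single_one, constructionA_span_one, ← Submodule.span_insert] at h

lemma span_eq_constructionA {n : ℕ} {C : Submodule (ZMod 2) (Fin n → ZMod 2)} {S : Set (E n)}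
    (h : ∀ v, v ∈ S ↔ ∃ z, reduceMod2 n z ∈ C ∧ intVec z = v) :
    Submodule.span ℤ S = constructionA C := by
  rw [show S = constructionA C from Set.ext h, Submodule.span_eq]

lemma constructionA_span_one_single_add_single :
    constructionA (Submodule.span (ZMod 2) {1, Pi.single 0 1 + Pi.single 1 1}) = latA1 := by
  refine (span_eq_constructionA fun v => ?_).symm
  simp only [Set.mem_ofPred_eq, mem_span_one_single_add_single, reduceMod2_apply, ← Int.cast_add,
    ZMod.intCast_eq_zero_iff_even, and_assoc, eq_comm (a := v)]

lemma constructionA_evenCode : constructionA (evenCode 4) = latD4 := by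
  refine (span_eq_constructionA fun v => ?_).symm
  simp only [Set.mem_ofPred_eq, mem_evenCode, Fin.sum_univ_four, reduceMod2_apply, ← Int.cast_add,
    ZMod.intCast_eq_zero_iff_even, eq_comm (a := v)]

lemma constructionA_top : constructionA ⊤ = latZ4 := by
  refine (span_eq_constructionA fun v => ?_).symm
  simp [eq_comm (a := v)]

end Identification

section Integral

variable {n : ℕ} {L Λ : Submodule ℤ (E n)}

lemma mem_constructionA_top {x : E n} : x ∈ constructionA ⊤ ↔ ∃ z, intVec z = x := by
  simp [mem_constructionA]

/-- The image of a lattice under a linear isometry of the ambient space. -/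
def isometryImage (g : E n ≃ₗᵢ[ℝ] E n) (L : Submodule ℤ (E n)) : Submodule ℤ (E n) :=
  L.map (g.toLinearEquiv.toLinearMap.restrictScalars ℤ)

lemma apply_mem_isometryImage (g : E n ≃ₗᵢ[ℝ] E n) {x : E n} (hx : x ∈ L) :
    g x ∈ isometryImage g L :=
  ⟨x, hx, rfl⟩

lemma isometricLattices_isometryImage (g : E n ≃ₗᵢ[ℝ] E n) (L : Submodule ℤ (E n)) :
    IsometricLattices L (isometryImage g L) :=
  ⟨g, rfl⟩

lemma LatticeIsIntegral.isometryImage (hL : LatticeIsIntegral L) (g : E n ≃ₗᵢ[ℝ] E n) :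
    LatticeIsIntegral (isometryImage g L) := by
  rintro _ ⟨x, hx, rfl⟩ _ ⟨y, hy, rfl⟩
  obtain ⟨k, hk⟩ := hL x hx y hy
  exact ⟨k, (g.inner_map_map x y).trans hk⟩

lemma reflection_apply_of_inner_self_eq_four {u : E n} (hu : ⟪u, u⟫ = 4) (x : E n) :
    (Submodule.span ℝ {u}).reflection x = (⟪u, x⟫ / 2) • u - x := by
  have hnorm : ‖u‖ ^ 2 = 4 := by rw [← real_inner_self_eq_norm_sq, hu]
  rw [Submodule.reflection_singleton_apply, RCLike.ofReal_real_eq_id, id, hnorm]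
  module

lemma reflection_mem_of_inner_self_eq_four (hΛ : ∀ x ∈ Λ, ∀ y ∈ Λ, ∃ k : ℤ, ⟪x, y⟫ = 2 * k)
    {u x : E n} (hu : u ∈ Λ) (hu4 : ⟪u, u⟫ = 4) (hx : x ∈ Λ) :
    (Submodule.span ℝ {u}).reflection x ∈ Λ := by
  obtain ⟨k, hk⟩ := hΛ u hu x hx
  rw [reflection_apply_of_inner_self_eq_four hu4, hk, mul_div_cancel_left₀ _ two_ne_zero,
    Int.cast_smul_eq_zsmul]
  exact sub_mem (Λ.smul_mem k hu) hx

lemma le_isometryImage_reflection (hΛ : ∀ x ∈ Λ, ∀ y ∈ Λ, ∃ k : ℤ, ⟪x, y⟫ = 2 * k) (hΛL : Λ ≤ L)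
    {u : E n} (hu : u ∈ Λ) (hu4 : ⟪u, u⟫ = 4) :
    Λ ≤ isometryImage (Submodule.span ℝ {u}).reflection L := by
  intro x hx
  rw [← Submodule.reflection_reflection (Submodule.span ℝ {u}) x]
  exact apply_mem_isometryImage _ (hΛL (reflection_mem_of_inner_self_eq_four hΛ hu hu4 hx))

lemma inner_two_smul_εv (i : Fin n) (x : E n) : ⟪(2 : ℝ) • εv i, x⟫ = 2 * x i := by
  rw [inner_smul_left, εv, EuclideanSpace.inner_single_left]
  simp

lemma exists_two_smul_eq_intVec (hL : LatticeIsIntegral L) (hL2 : constructionA ⊥ ≤ L) {x : E n}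
    (hx : x ∈ L) : ∃ m, (2 : ℝ) • x = intVec m := by
  choose m hm using fun i => hL _ (constructionA_bot_le_iff.1 hL2 i) x hx
  refine ⟨m, ?_⟩
  ext i
  rw [PiLp.smul_apply, smul_eq_mul, ← inner_two_smul_εv, hm, intVec_apply]

lemma inner_intVec_of_two_smul_eq {x : E n} {m : Fin n → ℤ} (hm : (2 : ℝ) • x = intVec m)
    (z : Fin n → ℤ) : 2 * ⟪intVec z, x⟫ = ((z ⬝ᵥ m : ℤ) : ℝ) := by
  rw [← inner_intVec, ← hm, inner_smul_right]

lemma four_mul_inner_self_of_two_smul_eq {x : E n} {m : Fin n → ℤ} (hm : (2 : ℝ) • x = intVec m) :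
    4 * ⟪x, x⟫ = ((m ⬝ᵥ m : ℤ) : ℝ) := by
  rw [← inner_intVec, ← hm, inner_smul_left, inner_smul_right, RCLike.conj_to_real]
  ring

lemma mem_constructionA_top_of_two_smul_eq {x : E n} {m : Fin n → ℤ}
    (hm : (2 : ℝ) • x = intVec m) (heven : ∀ i, Even (m i)) : x ∈ constructionA ⊤ := by
  choose t ht using fun i => (heven i).exists_two_nsmul
  refine mem_constructionA_top.2 ⟨t, ?_⟩
  ext i
  have hi : 2 * x i = 2 * t i := by simpa [ht] using congr($hm i)
  rw [intVec_apply, mul_left_cancel₀ two_ne_zero hi]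

lemma even_dotProduct_sub_dotProduct_self {m z : Fin n → ℤ} (hm : ∀ i, Odd (m i)) :
    Even (z ⬝ᵥ m - z ⬝ᵥ z) := by
  rw [← dotProduct_sub]
  refine Finset.even_sum _ fun i _ => ?_
  rw [Pi.sub_apply]
  have := hm i
  grind

lemma forall_even_or_forall_odd_of_four_dvd_dotProduct_self {m : Fin 4 → ℤ}
    (h : 4 ∣ m ⬝ᵥ m) :
    (∀ i, Even (m i)) ∨ ∀ i, Odd (m i) := by
  have hsq (k : ℤ) : k * k % 4 = k % 2 := by
    rcases Int.even_or_odd' k with ⟨t, rfl | rfl⟩ <;> ring_nf <;> omega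
  have h0 := hsq (m 0)
  have h1 := hsq (m 1)
  have h2 := hsq (m 2)
  have h3 := hsq (m 3)
  simp only [dotProduct, Fin.sum_univ_four] at h
  have hmod : (m 0 % 2 = 0 ∧ m 1 % 2 = 0 ∧ m 2 % 2 = 0 ∧ m 3 % 2 = 0) ∨
      (m 0 % 2 = 1 ∧ m 1 % 2 = 1 ∧ m 2 % 2 = 1 ∧ m 3 % 2 = 1) := by omega
  simpa [Fin.forall_fin_succ, Int.even_iff, Int.odd_iff] using hmod

lemma odd_of_four_mul_eq_dotProduct_self {m : Fin 4 → ℤ} (hm : ∀ i, Odd (m i)) {k : ℤ}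
    (hk : 4 * k = m ⬝ᵥ m) : Odd k := by
  have hsq (i : Fin 4) : 8 ∣ m i * m i - 1 := by
    simpa only [sq] using Int.eight_dvd_sq_sub_one_of_odd (hm i)
  have h0 := hsq 0
  have h1 := hsq 1
  have h2 := hsq 2
  have h3 := hsq 3
  simp only [dotProduct, Fin.sum_univ_four] at hk
  rw [Int.odd_iff]
  omega

lemma exists_odd_dotProduct_eq_two_mul {m : Fin 4 → ℤ} (hm : ∀ i, Odd (m i)) :
    ∃ s k, (∀ i, Odd (s i)) ∧ s ⬝ᵥ s = 4 ∧ Odd k ∧ s ⬝ᵥ m = 2 * k := by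
  have hsum : Even (m 0 + m 1 + m 2 + m 3) :=
    (((hm 0).add_odd (hm 1)).add_odd (hm 2)).add_odd (hm 3)
  obtain ⟨t, ht⟩ := hsum.two_dvd
  rcases Int.even_or_odd t with hteven | htodd
  · refine ⟨![1, 1, 1, -1], t - m 3, ?_, by decide, hteven.sub_odd (hm 3), ?_⟩
    · decide
    · have hdot : ![1, 1, 1, -1] ⬝ᵥ m = m 0 + m 1 + m 2 - m 3 := by
        simp [dotProduct, Fin.sum_univ_four, sub_eq_add_neg]
      linarith
  · refine ⟨1, t, by simp, by decide, htodd, ?_⟩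
    simpa [one_dotProduct, Fin.sum_univ_four] using ht

end Integral

section Reduction

variable {L : Submodule ℤ (E 4)}

lemma constructionA_bot_le_Λ4 : constructionA ⊥ ≤ Λ4 :=
  constructionA_span_one ▸ constructionA_mono bot_le

lemma exists_inner_eq_two_mul_of_mem_Λ4 : ∀ x ∈ Λ4, ∀ y ∈ Λ4, ∃ k : ℤ, ⟪x, y⟫ = 2 * k := by
  intro x hx y hy
  rw [← constructionA_span_one] at hx hy
  refine exists_inner_eq_two_mul_of_mem_constructionA (fun c hc d hd => ?_) hx hy
  obtain ⟨a, rfl⟩ := Submodule.mem_span_singleton.1 hc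
  obtain ⟨b, rfl⟩ := Submodule.mem_span_singleton.1 hd
  simp [show (4 : ZMod 2) = 0 from rfl]

lemma intVec_mem_Λ4_of_forall_odd {s : Fin 4 → ℤ} (hs : ∀ i, Odd (s i)) : intVec s ∈ Λ4 := by
  rw [← constructionA_span_one, intVec_mem_constructionA]
  convert! Submodule.mem_span_singleton_self (1 : Fin 4 → ZMod 2)
  ext i
  simpa using (ZMod.intCast_eq_one_iff_odd).2 (hs i)

lemma two_smul_eq_intVec_even_or_odd (hL : LatticeIsIntegral L) (hL2 : constructionA ⊥ ≤ L)
    {x : E 4} (hx : x ∈ L) :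
    ∃ m, (2 : ℝ) • x = intVec m ∧ ((∀ i, Even (m i)) ∨ ∀ i, Odd (m i)) := by
  obtain ⟨m, hm⟩ := exists_two_smul_eq_intVec hL hL2 hx
  obtain ⟨k, hk⟩ := hL x hx x hx
  have hnorm := four_mul_inner_self_of_two_smul_eq hm
  rw [hk] at hnorm
  exact ⟨m, hm, forall_even_or_forall_odd_of_four_dvd_dotProduct_self
    ⟨k, by exact_mod_cast hnorm.symm⟩⟩

lemma le_constructionA_top_of_odd_norm (hL : LatticeIsIntegral L) (hL2 : constructionA ⊥ ≤ L)
    {z : Fin 4 → ℤ} (hz : intVec z ∈ L) (hodd : Odd (z ⬝ᵥ z)) : L ≤ constructionA ⊤ := by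
  intro x hx
  obtain ⟨m, hm, heven | hmodd⟩ := two_smul_eq_intVec_even_or_odd hL hL2 hx
  · exact mem_constructionA_top_of_two_smul_eq hm heven
  · obtain ⟨k, hk⟩ := hL _ hz x hx
    have hzm : 2 * k = z ⬝ᵥ m := by
      have := inner_intVec_of_two_smul_eq hm z
      rw [hk] at this
      exact_mod_cast this
    have := even_dotProduct_sub_dotProduct_self (z := z) hmodd
    grind

lemma exists_reflection_eq_intVec {x : E 4} {m : Fin 4 → ℤ} (hm : (2 : ℝ) • x = intVec m)
    (hodd : ∀ i, Odd (m i)) :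
    ∃ u ∈ Λ4, ⟪u, u⟫ = 4 ∧ ∃ z, (Submodule.span ℝ {u}).reflection x = intVec z := by
  obtain ⟨s, k, hs, hs4, hk, hsm⟩ := exists_odd_dotProduct_eq_two_mul hodd
  have hu4 : ⟪intVec s, intVec s⟫ = 4 := by rw [inner_intVec, hs4]; norm_num
  have hux : ⟪intVec s, x⟫ = k := by
    have := inner_intVec_of_two_smul_eq hm s
    rw [hsm] at this
    push_cast at this
    linarith
  have hrefl : (2 : ℝ) • (Submodule.span ℝ {intVec s}).reflection x = intVec (k • s - m) := by
    rw [reflection_apply_of_inner_self_eq_four hu4, hux, ← intVecHom_apply (k • s - m), map_sub,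
      map_zsmul, intVecHom_apply, intVecHom_apply, ← hm]
    module
  obtain ⟨z, hz⟩ := mem_constructionA_top.1 <|
    mem_constructionA_top_of_two_smul_eq hrefl fun i => (hk.mul (hs i)).sub_odd (hodd i)
  exact ⟨intVec s, intVec_mem_Λ4_of_forall_odd hs, hu4, z, hz.symm⟩

/- If `x ∈ L` has half-odd coordinates, its norm is odd. The reflection makes `x` integral, and then
an integral vector of odd norm excludes all half-odd vectors from the reflected lattice. -/
lemma exists_isometricLattices_le_constructionA_top (hL : LatticeIsIntegral L) (hΛ : Λ4 ≤ L) :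
    ∃ L', IsometricLattices L L' ∧ Λ4 ≤ L' ∧ L' ≤ constructionA ⊤ := by
  by_cases hint : L ≤ constructionA ⊤
  · exact ⟨L, .refl L, hΛ, hint⟩
  obtain ⟨x, hx, hxint⟩ := SetLike.not_le_iff_exists.1 hint
  obtain ⟨m, hm, heven | hodd⟩ :=
    two_smul_eq_intVec_even_or_odd hL (constructionA_bot_le_Λ4.trans hΛ) hx
  · exact absurd (mem_constructionA_top_of_two_smul_eq hm heven) hxint
  obtain ⟨u, hu, hu4, z, hz⟩ := exists_reflection_eq_intVec hm hodd
  let g := (Submodule.span ℝ {u}).reflection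
  have hΛ' : Λ4 ≤ isometryImage g L :=
    le_isometryImage_reflection exists_inner_eq_two_mul_of_mem_Λ4 hΛ hu hu4
  have hzL : intVec z ∈ isometryImage g L := hz ▸ apply_mem_isometryImage g hx
  have hnorm : 4 * (z ⬝ᵥ z) = m ⬝ᵥ m := by
    have h := four_mul_inner_self_of_two_smul_eq hm
    rw [← g.inner_map_map x x, hz, inner_intVec] at h
    exact_mod_cast h
  exact ⟨isometryImage g L, isometricLattices_isometryImage g L, hΛ',
    le_constructionA_top_of_odd_norm (hL.isometryImage g) (constructionA_bot_le_Λ4.trans hΛ') hzL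
      (odd_of_four_mul_eq_dotProduct_self hodd hnorm)⟩

lemma exists_isometricLattices_constructionA (hL : LatticeIsIntegral L) (hΛ : Λ4 ≤ L) :
    ∃ C : Submodule (ZMod 2) (Fin 4 → ZMod 2), 1 ∈ C ∧ IsometricLattices L (constructionA C) := by
  obtain ⟨L', hiso, hΛ', hint⟩ := exists_isometricLattices_le_constructionA_top hL hΛ
  have hbot := constructionA_bot_le_Λ4.trans hΛ'
  refine ⟨codeOf L', ?_, by rwa [constructionA_codeOf hbot hint]⟩
  rwa [← constructionA_span_one, constructionA_le_iff_le_codeOf hbot,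
    Submodule.span_singleton_le_iff_mem] at hΛ'

end Reduction

/-- Every integral lattice in `ℝ⁴` containing `Λ₄` is isometric to one of the six
lattices `Λ₄`, `Λ₄ + ℤ·ε1`, `Λ₄ + ℤ·ε1 + ℤ·ε2`, `(A₁)⁴`, `D₄`, `ℤ⁴`. -/
theorem integral_lattices_containing_Λ4 (L : Submodule ℤ (E 4))
    (hL : LatticeIsIntegral L) (hΛ : Λ4 ≤ L) :
    IsometricLattices L Λ4 ∨
    IsometricLattices L (Λ4 ⊔ Submodule.span ℤ {εv 0}) ∨
    IsometricLattices L (Λ4 ⊔ Submodule.span ℤ {εv 0, εv 1}) ∨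
    IsometricLattices L latA1 ∨
    IsometricLattices L latD4 ∨
    IsometricLattices L latZ4 := by
  obtain ⟨C, hC, hLC⟩ := exists_isometricLattices_constructionA hL hΛ
  have hiso {D : Submodule (ZMod 2) (Fin 4 → ZMod 2)} (h : PermEquiv C D) :
      IsometricLattices L (constructionA D) := hLC.trans h.isometricLattices
  rw [← constructionA_span_one_single, ← constructionA_span_one_single_single,
    ← constructionA_span_one_single_add_single, ← constructionA_evenCode, ← constructionA_top,
    ← constructionA_span_one]
  exact (permEquiv_of_one_mem hC).imp hiso <| .imp hiso <| .imp hiso <| .imp hiso <| .imp hiso hiso
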